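/- Let L be a Lie algebra over a commutative ring R, let a, v ∈ L, and let α₁, …, αₙ ∈ R. Define the left-normed product p = a(v+α₁)(v+α₂)⋯(v+αₙ) by p₀ = a and p_j = ⁅p_{j−1}, v⁆ + α_j • p_{j−1}. Then for every index i with 1 ≤ i ≤ n there exists w ∈ L such that p = ⁅w, v⁆ + αᵢ • w. -/

import Mathlib

/-- The left-normed iterated product `a(v+α₁)(v+α₂)⋯(v+αₙ)`, where
`u(v+α)` denotes `⁅u, v⁆ + α • u`. -/
def leftNormedProd {R L : Type*} [CommRing R] [LieRing L] [LieAlgebra R L]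
    (v : L) (a : L) : List R → L
  | [] => a
  | α :: αs => leftNormedProd v (⁅a, v⁆ + α • a) αs

/-! The map `u ↦ u(v+β)` is the linear polynomial `X + β` evaluated at the endomorphism `-ad v`.
Hence `a(v+α₁)⋯(v+αₙ)` is the value at `a` of `∏ (X + αⱼ)` evaluated at `-ad v`, and any chosen
factor of this product in the commutative ring `R[X]` can be taken to be the last one applied. -/

section

open Polynomial LieAlgebra

variable {R L : Type*} [CommRing R] [LieRing L] [LieAlgebra R L]

theorem aeval_neg_ad_X_add_C_apply (v u : L) (β : R) :
    aeval (-ad R L v) (X + C β) u = ⁅u, v⁆ + β • u := by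
  simp

theorem leftNormedProd_eq_aeval_neg_ad (v a : L) (l : List R) :
    leftNormedProd v a l = aeval (-ad R L v) (l.map (X + C ·)).prod a := by
  induction l generalizing a with
  | nil => simp [leftNormedProd]
  | cons α l ih =>
    rw [leftNormedProd, ih, ← aeval_neg_ad_X_add_C_apply, ← Module.End.mul_apply, ← map_mul,
      mul_comm, List.map_cons, List.prod_cons]

theorem exists_leftNormedProd_eq_of_mem (v a : L) {β : R} {l : List R} (hβ : β ∈ l) :
    ∃ w : L, leftNormedProd v a l = ⁅w, v⁆ + β • w := by
  obtain ⟨q, hq⟩ : X + C β ∣ (l.map (X + C ·)).prod :=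
    List.dvd_prod (List.mem_map_of_mem hβ)
  refine ⟨aeval (-ad R L v) q a, ?_⟩
  rw [leftNormedProd_eq_aeval_neg_ad, hq, map_mul, Module.End.mul_apply,
    aeval_neg_ad_X_add_C_apply]

end

/-- Each factor of the left-normed product `p = a(v+α₁)⋯(v+αₙ)` can be pushed to
the right: for every `i` there is `w ∈ L` with `p = ⁅w, v⁆ + αᵢ • w`. -/
theorem factor_pushed_right {R L : Type*} [CommRing R] [LieRing L] [LieAlgebra R L]
    (a v : L) (n : ℕ) (α : Fin n → R) (i : Fin n) :
    ∃ w : L, leftNormedProd v a (List.ofFn α) = ⁅w, v⁆ + α i • w :=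
  exists_leftNormedProd_eq_of_mem v a (List.mem_ofFn.mpr ⟨i, rfl⟩)
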